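/- For any integer b ≥ 2 such that b + 1 is not a power of 2, there exist infinitely many positive integers t such that the b-Cullen number t·b^t + 1 is a b-Brier number. -/

import Mathlib

/-- An integer `m` is composite if `m > 1` and `m` is not prime. -/
def IsComposite (m : ℤ) : Prop := 1 < m ∧ ¬ Prime m

/-- `k` is a `b`-Sierpiński number: a positive integer with `gcd (k+1) (b-1) = 1`
such that `k * b ^ n + 1` is composite for all positive integers `n`. -/
def IsBSierpinski (b k : ℤ) : Prop :=
  0 < k ∧ Int.gcd (k + 1) (b - 1) = 1 ∧ ∀ n : ℕ, 0 < n → IsComposite (k * b ^ n + 1)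

/-- `k` is a `b`-Riesel number: a positive integer with `gcd (k-1) (b-1) = 1`
such that `k * b ^ n - 1` is composite for all positive integers `n`. -/
def IsBRiesel (b k : ℤ) : Prop :=
  0 < k ∧ Int.gcd (k - 1) (b - 1) = 1 ∧ ∀ n : ℕ, 0 < n → IsComposite (k * b ^ n - 1)

/-- `k` is a `b`-Brier number: both `b`-Sierpiński and `b`-Riesel. -/
def IsBBrier (b k : ℤ) : Prop := IsBSierpinski b k ∧ IsBRiesel b k

/-!
If all the numbers `w * b ^ n + 1` and `w * b ^ n - 1` share a factor with a fixed `P`, then so do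
`k * b ^ n + 1` and `k * b ^ n - 1` for every `k ≡ w [ZMOD P]`. As `t * b ^ t + 1` modulo `P` only
depends on `t` modulo `P` and on `t` modulo a multiple `Q` of the order of `b`, the Chinese
remainder theorem finds Cullen numbers `k` in the class of `w`, provided one solves the congruence
modulo `gcd P Q`. Taking `t ≡ -1 [ZMOD b - 1]` gives `b - 1 ∣ k`, hence both gcd conditions.

For `b ≥ 3` with `b + 1` not a power of `2`, there is, for each `m ≥ 2`, a prime `p_m` modulo which
`b` has order `m`: an odd prime factor of `b + 1` if `m = 2`, and a prime factor of `Φ_m(b)` not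
dividing `m` if `m ≥ 3`. In the latter case only one prime can divide both `m` and `Φ_m(b)`, its
square does not divide `Φ_m(b)`, and `Φ_m(b)` is larger than it (Zsigmondy). One table of residues
serves both coverings: if `w * b ^ a ≡ -1 [ZMOD p_m]`, then `p_m` divides `w * b ^ n + 1` for
`n ≡ a [MOD m]` and, when `m` is even, since `b ^ (m / 2) ≡ -1 [ZMOD p_m]`, also `w * b ^ n - 1`
for `n ≡ a + m / 2 [MOD m]`. For `b = 2` no prime has order `6`, and a known Brier number takes the
place of `w`.
-/

open Finset Polynomial

/-! ### Covering moduli and Cullen numbers -/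

/-- `P` witnesses that no term `k * b ^ n + c` is prime, apart from prime divisors of `P`: every
term shares a factor with it. With `c = 1` and `c = -1` this covers the Sierpiński and the Riesel
condition; `P` is usually the product of the primes of a covering set. -/
def IsCoveringModulus (P : ℕ) (b k c : ℤ) : Prop :=
  ∀ n : ℕ, Int.gcd (k * b ^ n + c) P ≠ 1

lemma pow_modEq_pow_of_modEq {P : ℤ} {Q m n : ℕ} {b : ℤ} (hb : b ^ Q ≡ 1 [ZMOD P])
    (h : m ≡ n [MOD Q]) : b ^ m ≡ b ^ n [ZMOD P] := by
  have hmod (i : ℕ) : b ^ i ≡ b ^ (i % Q) [ZMOD P] := by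
    simpa [← pow_mul, ← pow_add, Nat.div_add_mod] using (hb.pow (i / Q)).mul_right (b ^ (i % Q))
  exact (hmod m).trans (h ▸ (hmod n).symm)

lemma gcd_eq_of_modEq {x y n : ℤ} (h : x ≡ y [ZMOD n]) : Int.gcd x n = Int.gcd y n := by
  rw [← Int.gcd_emod, h.eq, Int.gcd_emod]

lemma IsCoveringModulus.congr {P : ℕ} {b k l c : ℤ} (h : IsCoveringModulus P b k c)
    (hkl : k ≡ l [ZMOD P]) : IsCoveringModulus P b l c := fun n =>
  (gcd_eq_of_modEq ((hkl.mul_right (b ^ n)).add_right c)) ▸ h n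

lemma isCoveringModulus_of_pow_modEq_one {P N : ℕ} {b k c : ℤ} (hN : 0 < N)
    (hb : b ^ N ≡ 1 [ZMOD P]) (h : ∀ n < N, Int.gcd (k * b ^ n + c) P ≠ 1) :
    IsCoveringModulus P b k c := fun n => by
  have hpow := pow_modEq_pow_of_modEq hb (Nat.mod_modEq n N)
  rw [← gcd_eq_of_modEq ((hpow.mul_left k).add_right c)]
  exact h _ (Nat.mod_lt n hN)

lemma isComposite_of_gcd_ne_one {m : ℤ} {P : ℕ} (hP : 0 < P) (hPm : P < m)
    (h : Int.gcd m P ≠ 1) : IsComposite m := by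
  refine ⟨by omega, fun hm => h ?_⟩
  rw [← Int.isCoprime_iff_gcd_eq_one, hm.coprime_iff_not_dvd]
  intro hdvd
  exact absurd (Int.le_of_dvd (mod_cast hP) hdvd) hPm.not_ge

lemma isBBrier_of_isCoveringModulus {b k : ℤ} {P : ℕ} (hb : 2 ≤ b) (hP : 0 < P)
    (hPk : P + 1 < k) (hdvd : b - 1 ∣ k) (hS : IsCoveringModulus P b k 1)
    (hR : IsCoveringModulus P b k (-1)) : IsBBrier b k := by
  have hle (n : ℕ) : k ≤ k * b ^ n := le_mul_of_one_le_right (by omega) (one_le_pow₀ (by omega))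
  obtain ⟨j, hj⟩ := hdvd
  refine ⟨⟨by omega, ?_, fun n _ => ?_⟩, by omega, ?_, fun n _ => ?_⟩
  · exact Int.isCoprime_iff_gcd_eq_one.1 ⟨1, -j, by rw [hj]; ring⟩
  · exact isComposite_of_gcd_ne_one hP (by linarith [hle n]) (hS n)
  · exact Int.isCoprime_iff_gcd_eq_one.1 ⟨-1, j, by rw [hj]; ring⟩
  · exact isComposite_of_gcd_ne_one hP (by linarith [hle n]) (hR n)

lemma sub_one_dvd_mul_pow_add_one {R : Type*} [CommRing R] {b t : R} (h : b - 1 ∣ t + 1) (n : ℕ) :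
    b - 1 ∣ t * b ^ n + 1 := by
  rw [show t * b ^ n + 1 = t * (b ^ n - 1) + (t + 1) by ring]
  exact ((sub_one_dvd_pow_sub_one b n).mul_left t).add h

lemma exists_cullen_modEq {b w : ℤ} {P Q r : ℕ} (hP : 0 < P) (hQ : 0 < Q)
    (hb : b ^ Q ≡ 1 [ZMOD P]) (hr : r * b ^ r + 1 ≡ w [ZMOD (P.gcd Q : ℕ)]) (N : ℕ) :
    ∃ t : ℕ, N < t ∧ t ≡ r [MOD Q] ∧ t * b ^ t + 1 ≡ w [ZMOD P] := by
  set b' := b ^ ((Q - 1) * r)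
  have hinv : b ^ r * b' ≡ 1 [ZMOD P] := by
    have hexp : r + (Q - 1) * r = Q * r := by
      rw [add_comm, ← Nat.succ_mul, Nat.succ_eq_add_one, Nat.sub_add_cancel hQ]
    rw [← pow_add, hexp, pow_mul]
    simpa using hb.pow r
  obtain ⟨c, -, hc⟩ := Int.existsUnique_equiv_nat ((w - 1) * b') (b := P) (mod_cast hP)
  have hcr : c ≡ r [MOD P.gcd Q] := by
    have hPg : ((P.gcd Q : ℕ) : ℤ) ∣ P := mod_cast P.gcd_dvd_left Q
    rw [← Int.natCast_modEq_iff]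
    calc (c : ℤ) ≡ (w - 1) * b' [ZMOD _] := hc.of_dvd hPg
      _ ≡ (r * b ^ r + 1 - 1) * b' [ZMOD _] := (hr.symm.sub_right 1).mul_right _
      _ = r * (b ^ r * b') := by ring
      _ ≡ r * 1 [ZMOD _] := (hinv.of_dvd hPg).mul_left _
      _ = r := mul_one _
  obtain ⟨s, hsP, hsQ⟩ := Nat.chineseRemainder' hcr
  obtain ⟨t, hNt, hts⟩ : ∃ t, N < t ∧ t ≡ s [MOD P * Q] :=
    ⟨s + P * Q * (N + 1), by nlinarith [Nat.mul_pos hP hQ], by simp [Nat.ModEq]⟩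
  have htr : t ≡ r [MOD Q] := (hts.of_mul_left P).trans hsQ
  have htc : (t : ℤ) ≡ c [ZMOD P] := Int.natCast_modEq_iff.2 ((hts.of_mul_right Q).trans hsP)
  refine ⟨t, hNt, htr, ?_⟩
  calc t * b ^ t + 1 ≡ (w - 1) * b' * b ^ r + 1 [ZMOD P] :=
        ((htc.trans hc).mul (pow_modEq_pow_of_modEq hb htr)).add_right 1
    _ = (w - 1) * (b ^ r * b') + 1 := by ring
    _ ≡ (w - 1) * 1 + 1 [ZMOD P] := (hinv.mul_left _).add_right 1
    _ = w := by ring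

theorem infinite_setOf_isBBrier_cullen {b w : ℤ} {P Q r : ℕ} (hb : 2 ≤ b) (hP : 0 < P)
    (hQ : 0 < Q) (hbQ : b ^ Q ≡ 1 [ZMOD P]) (hbr : b - 1 ∣ r + 1) (hdvd : b - 1 ∣ Q)
    (hr : r * b ^ r + 1 ≡ w [ZMOD (P.gcd Q : ℕ)]) (hS : IsCoveringModulus P b w 1)
    (hR : IsCoveringModulus P b w (-1)) :
    {t : ℕ | 0 < t ∧ IsBBrier b ((t : ℤ) * b ^ t + 1)}.Infinite := by
  refine Set.infinite_of_forall_exists_gt fun N => ?_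
  obtain ⟨t, hNt, htr, htw⟩ := exists_cullen_modEq hP hQ hbQ hr (N + P)
  have hbt : b - 1 ∣ (t : ℤ) + 1 := by
    have hmod := ((Int.natCast_modEq_iff.2 htr).of_dvd hdvd).add_right 1
    exact hmod.dvd_iff.2 hbr
  have hlt : (P : ℤ) + 1 < t * b ^ t + 1 := by
    have : (t : ℤ) ≤ t * b ^ t := le_mul_of_one_le_right (by omega) (one_le_pow₀ (by omega))
    omega
  exact ⟨t, ⟨by omega, isBBrier_of_isCoveringModulus hb hP hlt (sub_one_dvd_mul_pow_add_one hbt t)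
    (hS.congr htw.symm) (hR.congr htw.symm)⟩, by omega⟩

/-! ### Base `2` -/

/-- A Brier number in base `2`, found by Clavier. -/
def clavierBrier : ℤ := 3316923598096294713661

/-- The product of the primes occurring in the two covering sets of `clavierBrier`. -/
def clavierModulus : ℕ :=
  3 * 5 * 7 * 11 * 13 * 17 * 19 * 31 * 37 * 41 * 73 * 97 * 109 * 151 * 181 * 241 * 331 * 673 * 1321

lemma two_pow_modEq_one_clavierModulus : 2 ^ 720 ≡ 1 [ZMOD clavierModulus] := by decide +kernel

lemma isCoveringModulus_clavierModulus_one :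
    IsCoveringModulus clavierModulus 2 clavierBrier 1 :=
  isCoveringModulus_of_pow_modEq_one (by norm_num) two_pow_modEq_one_clavierModulus
    (by decide +kernel)

lemma isCoveringModulus_clavierModulus_neg_one :
    IsCoveringModulus clavierModulus 2 clavierBrier (-1) :=
  isCoveringModulus_of_pow_modEq_one (by norm_num) two_pow_modEq_one_clavierModulus
    (by decide +kernel)

theorem infinite_setOf_isBBrier_cullen_two :
    {t : ℕ | 0 < t ∧ IsBBrier 2 ((t : ℤ) * 2 ^ t + 1)}.Infinite := by
  -- The modulus meets `720` in `3 * 5`, where both `15 * 2 ^ 15 + 1` and Clavier's number are `1`.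
  have hr : (15 : ℕ) * 2 ^ 15 + 1 ≡ clavierBrier [ZMOD (clavierModulus.gcd 720 : ℕ)] := by
    decide +kernel
  exact infinite_setOf_isBBrier_cullen le_rfl (by decide +kernel) (by norm_num)
    two_pow_modEq_one_clavierModulus (by norm_num) (by norm_num) hr
    isCoveringModulus_clavierModulus_one isCoveringModulus_clavierModulus_neg_one

/-! ### Existence of primitive prime divisors -/

lemma orderOf_eq_ordCompl_of_dvd_eval_cyclotomic {p n : ℕ} (hp : p.Prime) (hn : n ≠ 0) {b : ℤ}
    (h : (p : ℤ) ∣ (cyclotomic n ℤ).eval b) : orderOf (b : ZMod p) = ordCompl[p] n := by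
  have : Fact p.Prime := ⟨hp⟩
  have : NeZero ((ordCompl[p] n : ℕ) : ZMod p) := NeZero.of_not_dvd _ (Nat.not_dvd_ordCompl hp hn)
  have hroot : (cyclotomic n (ZMod p)).IsRoot (b : ZMod p) := by
    rw [IsRoot.def, ← map_cyclotomic_int, eval_intCast_map, eq_intCast]
    exact (ZMod.intCast_zmod_eq_zero_iff_dvd _ _).2 h
  rw [← Nat.ordProj_mul_ordCompl_eq_self n p,
    isRoot_cyclotomic_prime_pow_mul_iff_of_charP] at hroot
  exact hroot.eq_orderOf.symm

lemma eq_of_dvd_of_dvd_eval_cyclotomic {p q n : ℕ} (hp : p.Prime) (hq : q.Prime) (hpn : p ∣ n)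
    (hqn : q ∣ n) (hn : n ≠ 0) {b : ℤ} (hpb : (p : ℤ) ∣ (cyclotomic n ℤ).eval b)
    (hqb : (q : ℤ) ∣ (cyclotomic n ℤ).eval b) : p = q := by
  wlog hlt : p < q generalizing p q
  · by_contra hne
    exact hne (this hq hp hqn hpn hqb hpb (by omega)).symm
  have hdvd : q ∣ ordCompl[p] n :=
    Nat.dvd_ordCompl_of_dvd_not_dvd hqn fun h => hlt.ne ((Nat.prime_dvd_prime_iff_eq hp hq).1 h)
  have hle : q ≤ ordCompl[p] n := Nat.le_of_dvd (Nat.ordCompl_pos p hn) hdvd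
  rw [← orderOf_eq_ordCompl_of_dvd_eval_cyclotomic hp hn hpb] at hle
  exact absurd (ZMod.orderOf_lt hp.one_lt (b : ZMod p)) (by omega)

lemma cyclotomic_dvd_geom_sum_X_pow_div {p n : ℕ} (hp : 1 < p) (hpn : p ∣ n) (hn : n ≠ 0) :
    cyclotomic n ℤ ∣ ∑ i ∈ range p, (X ^ (n / p)) ^ i := by
  have hmem : n / p ∈ n.properDivisors :=
    Nat.mem_properDivisors.2 ⟨Nat.div_dvd_of_dvd hpn, Nat.div_lt_self (by omega) hp⟩
  have hne : (X ^ (n / p) - 1 : ℤ[X]) ≠ 0 :=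
    X_pow_sub_C_ne_zero (Nat.div_pos (Nat.le_of_dvd (by omega) hpn) (by omega)) 1
  apply (mul_dvd_mul_iff_left hne).1
  rw [mul_geom_sum, ← pow_mul, Nat.div_mul_cancel hpn]
  exact X_pow_sub_one_mul_cyclotomic_dvd_X_pow_sub_one_of_dvd ℤ hmem

lemma not_sq_dvd_geom_sum {p : ℕ} (hp : p.Prime) (hodd : Odd p) {x : ℤ} (hx : x ≡ 1 [ZMOD p]) :
    ¬ (p : ℤ) ^ 2 ∣ ∑ i ∈ range p, x ^ i := by
  obtain ⟨y, hy⟩ := hx.symm.dvd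
  obtain rfl : x = 1 + p * y := by omega
  have hsub := odd_sq_dvd_geom_sum₂_sub 1 y hodd
  simp only [one_pow, mul_one] at hsub
  intro h
  have hpp : (p : ℤ) ^ 2 ∣ (p : ℤ) ^ 1 := by simpa using (dvd_sub_right h).1 hsub
  rw [pow_dvd_pow_iff (mod_cast hp.ne_zero) (Nat.prime_iff_prime_int.1 hp).not_isUnit] at hpp
  omega

lemma not_four_dvd_sq_add_one (x : ℤ) : ¬ 4 ∣ x ^ 2 + 1 := by
  have hsq : ∀ y : ZMod 4, y ^ 2 + 1 ≠ 0 := by decide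
  intro h
  exact hsq x (mod_cast (ZMod.intCast_zmod_eq_zero_iff_dvd _ 4).2 h)

lemma not_sq_dvd_eval_cyclotomic {p n : ℕ} (hp : p.Prime) (hpn : p ∣ n) (hn : 3 ≤ n) {b : ℤ}
    (h : (p : ℤ) ∣ (cyclotomic n ℤ).eval b) : ¬ (p : ℤ) ^ 2 ∣ (cyclotomic n ℤ).eval b := by
  have : Fact p.Prime := ⟨hp⟩
  have hn0 : n ≠ 0 := by omega
  have hord := orderOf_eq_ordCompl_of_dvd_eval_cyclotomic hp hn0 h
  have hdvd : (cyclotomic n ℤ).eval b ∣ ∑ i ∈ range p, (b ^ (n / p)) ^ i := by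
    simpa [eval_finsetSum] using
      eval_dvd (x := b) (cyclotomic_dvd_geom_sum_X_pow_div hp.one_lt hpn hn0)
  intro hsq
  rcases hp.eq_two_or_odd' with rfl | hodd
  · have hone : ordCompl[2] n = 1 := by
      have := ZMod.orderOf_lt one_lt_two (b : ZMod 2)
      have := Nat.ordCompl_pos 2 hn0
      omega
    have hpow : 2 ^ n.factorization 2 = n := by
      simpa [hone] using Nat.ordProj_mul_ordCompl_eq_self n 2
    obtain ⟨j, hj⟩ : 2 ^ 2 ∣ n := by
      rw [← hpow]
      refine pow_dvd_pow 2 (not_lt.1 fun hlt => ?_)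
      have := Nat.pow_le_pow_right two_pos (Nat.le_of_lt_succ hlt)
      omega
    rw [show n / 2 = j * 2 by omega, pow_mul, geom_sum_two] at hdvd
    exact not_four_dvd_sq_add_one _ (hsq.trans hdvd)
  · refine not_sq_dvd_geom_sum hp hodd ?_ (hsq.trans hdvd)
    rw [← ZMod.intCast_eq_intCast_iff, Int.cast_pow, Int.cast_one, ← orderOf_dvd_iff_pow_eq_one,
      hord]
    rw [← Nat.ordCompl_div_of_dvd hp hpn]
    exact Nat.ordCompl_dvd _ _

lemma lt_natAbs_eval_cyclotomic {p n : ℕ} (hp : p.Prime) (hpn : p ∣ n) (hn : n ≠ 0) {b : ℤ}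
    (hb : 3 ≤ b) : p < ((cyclotomic n ℤ).eval b).natAbs := by
  lift b to ℕ using by omega
  have hn2 : 2 ≤ n := hp.two_le.trans (Nat.le_of_dvd (by omega) hpn)
  have htot : p - 1 ≤ n.totient := by
    rw [← Nat.totient_prime hp]
    exact Nat.le_of_dvd (Nat.totient_pos.2 (by omega)) (Nat.totient_dvd_of_dvd hpn)
  have := hp.pos
  calc p ≤ 2 ^ (p - 1) := by have := Nat.lt_two_pow_self (n := p - 1); omega
    _ ≤ 2 ^ n.totient := Nat.pow_le_pow_right two_pos htot
    _ ≤ (b - 1) ^ n.totient := Nat.pow_le_pow_left (by omega) _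
    _ < _ := sub_one_pow_totient_lt_natAbs_cyclotomic_eval hn2 (by omega)

lemma exists_prime_dvd_eval_cyclotomic_not_dvd {b : ℤ} (hb : 3 ≤ b) {n : ℕ} (hn : 3 ≤ n) :
    ∃ p : ℕ, p.Prime ∧ (p : ℤ) ∣ (cyclotomic n ℤ).eval b ∧ ¬ p ∣ n := by
  have hn0 : n ≠ 0 := by omega
  set v := ((cyclotomic n ℤ).eval b).natAbs
  have hdvd {d : ℕ} : (d : ℤ) ∣ (cyclotomic n ℤ).eval b ↔ d ∣ v := Int.natCast_dvd
  have hlt {p : ℕ} (hp : p.Prime) (hpn : p ∣ n) : p < v := lt_natAbs_eval_cyclotomic hp hpn hn0 hb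
  by_contra! hdiv
  have hv1 : v ≠ 1 := by
    have := hlt (Nat.minFac_prime (by omega)) (Nat.minFac_dvd n)
    have := Nat.minFac_pos n
    omega
  obtain ⟨p, hp, hpv⟩ := Nat.exists_prime_and_dvd hv1
  have hpn : p ∣ n := hdiv p hp (hdvd.2 hpv)
  have hvp : v = p ^ v.primeFactorsList.length :=
    Nat.eq_prime_pow_of_unique_prime_dvd (by have := hlt hp hpn; omega) fun {q} hq hqv =>
      eq_of_dvd_of_dvd_eval_cyclotomic hq hp (hdiv q hq (hdvd.2 hqv)) hpn hn0 (hdvd.2 hqv)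
        (hdvd.2 hpv)
  have hlen : v.primeFactorsList.length ≤ 1 := by
    by_contra! hlen
    have hsq : p ^ 2 ∣ v := hvp ▸ pow_dvd_pow p hlen
    exact not_sq_dvd_eval_cyclotomic hp hpn hn (hdvd.2 hpv) (mod_cast hdvd.2 hsq)
  have hle : v ≤ p := (hvp.trans_le (Nat.pow_le_pow_right hp.pos hlen)).trans_eq (pow_one p)
  exact absurd (hlt hp hpn) hle.not_gt

theorem exists_prime_orderOf_eq_of_three_le {b : ℤ} (hb : 3 ≤ b) {n : ℕ} (hn : 3 ≤ n) :
    ∃ p : ℕ, p.Prime ∧ orderOf (b : ZMod p) = n := by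
  obtain ⟨p, hp, hpb, hpn⟩ := exists_prime_dvd_eval_cyclotomic_not_dvd hb hn
  refine ⟨p, hp, ?_⟩
  rw [orderOf_eq_ordCompl_of_dvd_eval_cyclotomic hp (by omega) hpb,
    (Nat.ordCompl_eq_self_iff_zero_or_not_dvd n hp).2 (.inr hpn)]

lemma exists_prime_orderOf_eq_two {b : ℤ} (hb : 0 ≤ b) (hb2 : ¬ ∃ n : ℕ, b + 1 = 2 ^ n) :
    ∃ p : ℕ, p.Prime ∧ orderOf (b : ZMod p) = 2 := by
  lift b to ℕ using hb
  obtain ⟨n, hn⟩ | ⟨p, hp, hpb, hodd⟩ := Nat.eq_two_pow_or_exists_odd_prime_and_dvd (b + 1)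
  · exact absurd ⟨n, mod_cast hn⟩ hb2
  · have : Fact p.Prime := ⟨hp⟩
    have hneg : ((b : ℤ) : ZMod p) = -1 := by
      rw [← add_eq_zero_iff_eq_neg]
      exact_mod_cast (ZMod.natCast_eq_zero_iff _ _).2 hpb
    refine ⟨p, hp, ?_⟩
    rw [hneg, orderOf_neg_one, ringChar.eq (ZMod p) p, if_neg]
    rintro rfl
    exact absurd hodd (by decide)

theorem exists_prime_orderOf_eq {b : ℤ} (hb : 3 ≤ b) (hb2 : ¬ ∃ n : ℕ, b + 1 = 2 ^ n) {n : ℕ}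
    (hn : 2 ≤ n) : ∃ p : ℕ, p.Prime ∧ orderOf (b : ZMod p) = n := by
  rcases hn.eq_or_lt with rfl | hn3
  · exact exists_prime_orderOf_eq_two (by omega) hb2
  · exact exists_prime_orderOf_eq_of_three_le hb hn3

/-! ### A covering set from primitive primes -/

lemma isCoveringModulus_of_forall_exists_dvd {P : ℕ} {b k c : ℤ}
    (h : ∀ n : ℕ, ∃ d : ℕ, d ≠ 1 ∧ d ∣ P ∧ (d : ℤ) ∣ k * b ^ n + c) :
    IsCoveringModulus P b k c := fun n hn => by
  obtain ⟨d, hd, hdP, hdvd⟩ := h n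
  exact hd (Nat.dvd_one.1 (hn ▸ Int.dvd_gcd hdvd (mod_cast hdP)))

lemma exists_forall_dvd_mul_sub {R ι : Type*} [CommRing R] [Finite ι] {p u : ι → R}
    (hp : Pairwise (Function.onFun IsCoprime p)) (hu : ∀ i, IsCoprime (u i) (p i)) (v : ι → R) :
    ∃ w : R, ∀ i, p i ∣ w * u i - v i := by
  choose x y hxy using hu
  obtain ⟨w, hw⟩ := Ideal.exists_forall_sub_mem_ideal (I := fun i => Ideal.span {p i})
    (fun i j hij => (Ideal.isCoprime_span_singleton_iff _ _).2 (hp hij)) (fun i => v i * x i)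
  refine ⟨w, fun i => ?_⟩
  obtain ⟨z, hz⟩ := Ideal.mem_span_singleton.1 (hw i)
  exact ⟨z * u i - v i * y i, by linear_combination u i * hz + v i * hxy i⟩

lemma pow_half_eq_neg_one {R : Type*} [CommRing R] [NoZeroDivisors R] {x : R}
    (h0 : 0 < orderOf x) (heven : Even (orderOf x)) : x ^ (orderOf x / 2) = -1 :=
  ((IsPrimitiveRoot.orderOf x).pow h0
    (Nat.div_mul_cancel heven.two_dvd).symm).eq_neg_one_of_two_right

/-- A choice, for each `m ∈ s`, of a primitive prime divisor `p m` of `b ^ m - 1`. -/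
structure IsPrimitivePrimeSystem (b : ℤ) (s : Finset ℕ) (p : ℕ → ℕ) : Prop where
  prime : ∀ m ∈ s, (p m).Prime
  orderOf_eq : ∀ m ∈ s, orderOf (b : ZMod (p m)) = m

namespace IsPrimitivePrimeSystem

variable {b : ℤ} {s : Finset ℕ} {p : ℕ → ℕ} {m : ℕ}

lemma pow_modEq_one (h : IsPrimitivePrimeSystem b s p) (hm : m ∈ s) : b ^ m ≡ 1 [ZMOD p m] := by
  rw [← ZMod.intCast_eq_intCast_iff, Int.cast_pow, Int.cast_one, ← orderOf_dvd_iff_pow_eq_one,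
    h.orderOf_eq m hm]

lemma lt (h : IsPrimitivePrimeSystem b s p) (hm : m ∈ s) : m < p m :=
  (h.orderOf_eq m hm).symm.trans_lt (ZMod.orderOf_lt (h.prime m hm).one_lt _)

lemma pow_half_modEq_neg_one (h : IsPrimitivePrimeSystem b s p) (hm : m ∈ s) (hpos : 0 < m)
    (heven : Even m) : b ^ (m / 2) ≡ -1 [ZMOD p m] := by
  have : Fact (p m).Prime := ⟨h.prime m hm⟩
  have hord := h.orderOf_eq m hm
  have hhalf := pow_half_eq_neg_one (hord.symm ▸ hpos) (hord.symm ▸ heven)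
  rw [hord] at hhalf
  exact (ZMod.intCast_eq_intCast_iff _ _ _).1 (mod_cast hhalf)

lemma coprime (h : IsPrimitivePrimeSystem b s p) {m n : ℕ} (hm : m ∈ s) (hn : n ∈ s)
    (hmn : m ≠ n) : (p m).Coprime (p n) :=
  (Nat.coprime_primes (h.prime m hm) (h.prime n hn)).2 fun hp =>
    hmn <| by rw [← h.orderOf_eq m hm, hp, h.orderOf_eq n hn]

lemma pow_modEq_one_prod (h : IsPrimitivePrimeSystem b s p) {N : ℕ} (hN : ∀ m ∈ s, m ∣ N) :
    b ^ N ≡ 1 [ZMOD (∏ m ∈ s, p m : ℕ)] := by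
  refine (Int.modEq_iff_dvd.2 ?_).symm
  rw [Nat.cast_prod]
  refine Finset.prod_dvd_of_coprime
    (fun m hm n hn hmn => Nat.isCoprime_iff_coprime.2 (h.coprime hm hn hmn)) fun m hm => ?_
  obtain ⟨j, rfl⟩ := hN m hm
  rw [pow_mul]
  simpa using ((h.pow_modEq_one hm).pow j).symm.dvd

lemma isCoprime_pow (h : IsPrimitivePrimeSystem b s p) (hm : m ∈ s) (hpos : 0 < m) (n : ℕ) :
    IsCoprime (b ^ n) (p m) := by
  obtain ⟨z, hz⟩ := (h.pow_modEq_one hm).dvd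
  refine IsCoprime.pow_left ⟨b ^ (m - 1), z, ?_⟩
  rw [← pow_succ, Nat.sub_add_cancel hpos]
  linear_combination -hz

lemma exists_mul_pow_modEq_neg_one (h : IsPrimitivePrimeSystem b s p) (hs : ∀ m ∈ s, 0 < m)
    (f : ℕ → ℕ) : ∃ w : ℤ, ∀ m ∈ s, w * b ^ f m ≡ -1 [ZMOD p m] := by
  obtain ⟨w, hw⟩ := exists_forall_dvd_mul_sub (p := fun m : s => (p m : ℤ))
    (fun m n hmn => Nat.isCoprime_iff_coprime.2 (h.coprime m.2 n.2 (Subtype.coe_ne_coe.2 hmn)))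
    (fun m => h.isCoprime_pow m.2 (hs m m.2) (f m)) (fun _ => -1)
  exact ⟨w, fun m hm => (Int.modEq_iff_dvd.2 (hw ⟨m, hm⟩)).symm⟩

lemma isCoveringModulus (h : IsPrimitivePrimeSystem b s p) {k c : ℤ}
    (hc : ∀ n : ℕ, ∃ m ∈ s, k * b ^ n ≡ -c [ZMOD p m]) :
    IsCoveringModulus (∏ m ∈ s, p m) b k c :=
  isCoveringModulus_of_forall_exists_dvd fun n => by
    obtain ⟨m, hm, hmod⟩ := hc n
    exact ⟨p m, (h.prime m hm).ne_one, dvd_prod_of_mem p hm, by simpa using hmod.symm.dvd⟩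

lemma isCoveringModulus_one (h : IsPrimitivePrimeSystem b s p) {f : ℕ → ℕ} {w : ℤ}
    (hw : ∀ m ∈ s, w * b ^ f m ≡ -1 [ZMOD p m]) (hf : ∀ n, ∃ m ∈ s, n ≡ f m [MOD m]) :
    IsCoveringModulus (∏ m ∈ s, p m) b w 1 :=
  h.isCoveringModulus fun n => by
    obtain ⟨m, hm, hn⟩ := hf n
    exact ⟨m, hm, ((pow_modEq_pow_of_modEq (h.pow_modEq_one hm) hn).mul_left w).trans (hw m hm)⟩

lemma isCoveringModulus_neg_one (h : IsPrimitivePrimeSystem b s p) (hs : ∀ m ∈ s, 0 < m)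
    {f : ℕ → ℕ} {w : ℤ} (hw : ∀ m ∈ s, w * b ^ f m ≡ -1 [ZMOD p m])
    (hf : ∀ n, ∃ m ∈ s, Even m ∧ n ≡ f m + m / 2 [MOD m]) :
    IsCoveringModulus (∏ m ∈ s, p m) b w (-1) :=
  h.isCoveringModulus fun n => by
    obtain ⟨m, hm, heven, hn⟩ := hf n
    refine ⟨m, hm, ?_⟩
    calc w * b ^ n ≡ w * b ^ (f m + m / 2) [ZMOD p m] :=
          (pow_modEq_pow_of_modEq (h.pow_modEq_one hm) hn).mul_left w
      _ = w * b ^ f m * b ^ (m / 2) := by ring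
      _ ≡ -1 * -1 [ZMOD p m] := (hw m hm).mul (h.pow_half_modEq_neg_one hm (hs m hm) heven)
      _ = - -1 := by ring

lemma not_dvd_sub_one (h : IsPrimitivePrimeSystem b s p) (hm : m ∈ s) (hm1 : m ≠ 1) :
    ¬ (p m : ℤ) ∣ b - 1 := fun hdvd => hm1 <| by
  rw [← h.orderOf_eq m hm, orderOf_eq_one_iff, ← sub_eq_zero]
  exact_mod_cast (ZMod.intCast_zmod_eq_zero_iff_dvd _ _).2 hdvd

end IsPrimitivePrimeSystem

/-- The orders `m` whose primitive primes enter the covering set of `w` when `b ≥ 3`. -/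
def coveringOrders : Finset ℕ := {2, 3, 4, 6, 8, 9, 12, 18, 24, 27, 36, 54, 108}

/-- The residue `a` modulo `m` with `w * b ^ a ≡ -1 [ZMOD p_m]`, for `m ∈ coveringOrders`; the value
elsewhere is irrelevant. The classes `n ≡ a [MOD m]` with `m = 2, 3, 6, 9, 18, 27, 36, 54, 108`
cover the integers, and so do the shifted classes `n ≡ a + m / 2 [MOD m]` with
`m = 2, 4, 6, 8, 12, 24`. -/
def coveringResidue : ℕ → ℕ
  | 3 => 1
  | 4 => 2
  | 6 => 3
  | 8 => 6
  | 9 => 5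
  | 12 => 4
  | 18 => 11
  | 24 => 2
  | 27 => 17
  | 36 => 17
  | 54 => 35
  | 108 => 107
  | _ => 0

lemma two_le_of_mem_coveringOrders : ∀ m ∈ coveringOrders, 2 ≤ m := by decide

lemma dvd_of_mem_coveringOrders : ∀ m ∈ coveringOrders, m ∣ 216 := by decide

lemma exists_modEq_coveringResidue (n : ℕ) :
    ∃ m ∈ coveringOrders, n ≡ coveringResidue m [MOD m] := by
  have h : ∀ i < 216, ∃ m ∈ coveringOrders, i ≡ coveringResidue m [MOD m] := by decide +kernel
  obtain ⟨m, hm, hmod⟩ := h (n % 216) (Nat.mod_lt n (by norm_num))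
  exact ⟨m, hm, ((Nat.mod_modEq n 216).of_dvd (dvd_of_mem_coveringOrders m hm)).symm.trans hmod⟩

lemma exists_even_modEq_coveringResidue_add_half (n : ℕ) :
    ∃ m ∈ coveringOrders, Even m ∧ n ≡ coveringResidue m + m / 2 [MOD m] := by
  have h : ∀ i < 216, ∃ m ∈ coveringOrders, Even m ∧ i ≡ coveringResidue m + m / 2 [MOD m] := by
    decide +kernel
  obtain ⟨m, hm, heven, hmod⟩ := h (n % 216) (Nat.mod_lt n (by norm_num))
  exact ⟨m, hm, heven,
    ((Nat.mod_modEq n 216).of_dvd (dvd_of_mem_coveringOrders m hm)).symm.trans hmod⟩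

lemma coprime_216_of_prime {q : ℕ} (hq : q.Prime) (h3 : 3 < q) : q.Coprime 216 := by
  rw [hq.coprime_iff_not_dvd, show 216 = 6 ^ 3 by norm_num]
  intro hdvd
  have h6 : q ∣ 2 * 3 := hq.dvd_of_dvd_pow hdvd
  rcases hq.dvd_mul.1 h6 with h | h <;> have := Nat.le_of_dvd (by norm_num) h <;> omega

lemma gcd_prod_coveringOrders_dvd {b : ℤ} {p : ℕ → ℕ} {d : ℕ}
    (h : IsPrimitivePrimeSystem b coveringOrders p) (hd : b - 1 = d) :
    (∏ m ∈ coveringOrders, p m).gcd (216 * d) ∣ (p 2).gcd 3 := by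
  have hpd {m : ℕ} (hm : m ∈ coveringOrders) : (p m).Coprime d := by
    have hndvd := h.not_dvd_sub_one hm (by have := two_le_of_mem_coveringOrders m hm; omega)
    rw [hd, Int.natCast_dvd_natCast] at hndvd
    exact (h.prime m hm).coprime_iff_not_dvd.2 hndvd
  have hrest : (∏ m ∈ coveringOrders.erase 2, p m).Coprime 216 :=
    Nat.Coprime.prod_left fun m hm => by
      obtain ⟨hm2, hm⟩ := mem_erase.1 hm
      have := two_le_of_mem_coveringOrders m hm
      exact coprime_216_of_prime (h.prime m hm) (by have := h.lt hm; omega)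
  have h2 : 2 ∈ coveringOrders := by decide
  have hgcd : (p 2).gcd 216 ∣ 3 := by
    rcases (show 3 ≤ p 2 from h.lt h2).eq_or_lt with h3 | h3
    · exact h3 ▸ Nat.gcd_dvd_left _ _
    · simp [(coprime_216_of_prime (h.prime 2 h2) h3).gcd_eq_one]
  rw [Nat.Coprime.gcd_mul_right_cancel_right 216 (Nat.Coprime.prod_left fun m => hpd).symm,
    ← mul_prod_erase _ _ h2, Nat.Coprime.gcd_mul_right_cancel _ hrest]
  exact Nat.dvd_gcd (Nat.gcd_dvd_left _ _) hgcd

lemma mul_pow_add_one_modEq_neg_one {b g : ℤ} {r : ℕ} (hr : Odd r) (hg : g ∣ 3)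
    (hb : b ≡ -1 [ZMOD g]) (hr1 : r ≡ -1 [ZMOD g]) : r * b ^ r + 1 ≡ -1 [ZMOD g] :=
  calc r * b ^ r + 1 ≡ -1 * (-1) ^ r + 1 [ZMOD g] := (hr1.mul (hb.pow r)).add_right 1
    _ = 2 := by rw [hr.neg_one_pow]; norm_num
    _ ≡ -1 [ZMOD g] := (Int.modEq_iff_dvd.2 (by simpa using hg)).symm

lemma infinite_setOf_isBBrier_cullen_of_isPrimitivePrimeSystem {b : ℤ} {p : ℕ → ℕ} (hb : 2 ≤ b)
    (h : IsPrimitivePrimeSystem b coveringOrders p) :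
    {t : ℕ | 0 < t ∧ IsBBrier b ((t : ℤ) * b ^ t + 1)}.Infinite := by
  obtain ⟨d, hd⟩ : ∃ d : ℕ, b - 1 = d := Int.eq_ofNat_of_zero_le (by omega)
  obtain ⟨r, hr⟩ : ∃ r : ℕ, (r : ℤ) + 1 = (216 * d : ℕ) := ⟨216 * d - 1, by omega⟩
  have hpos (m : ℕ) (hm : m ∈ coveringOrders) : 0 < m :=
    two_pos.trans_le (two_le_of_mem_coveringOrders m hm)
  obtain ⟨w, hw⟩ := h.exists_mul_pow_modEq_neg_one hpos coveringResidue
  set P := ∏ m ∈ coveringOrders, p m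
  have hbQ : b ^ (216 * d) ≡ 1 [ZMOD P] :=
    h.pow_modEq_one_prod fun m hm => (dvd_of_mem_coveringOrders m hm).mul_right d
  have hdQ : b - 1 ∣ (216 * d : ℕ) := by simp [hd]
  have hrw : r * b ^ r + 1 ≡ w [ZMOD (P.gcd (216 * d) : ℕ)] := by
    obtain ⟨hg2, hg3⟩ := Nat.dvd_gcd_iff.1 (gcd_prod_coveringOrders_dvd h hd)
    have h2 : 2 ∈ coveringOrders := by decide
    have hbg : b ≡ -1 [ZMOD (P.gcd (216 * d) : ℕ)] := by
      simpa using (h.pow_half_modEq_neg_one h2 two_pos even_two).of_dvd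
        (Int.natCast_dvd_natCast.2 hg2)
    have hwg : w ≡ -1 [ZMOD (P.gcd (216 * d) : ℕ)] := by
      simpa [coveringResidue] using (hw 2 h2).of_dvd (Int.natCast_dvd_natCast.2 hg2)
    have hrg : r ≡ -1 [ZMOD (P.gcd (216 * d) : ℕ)] :=
      (Int.modEq_iff_dvd.2 (by
        rw [sub_neg_eq_add, hr]; exact_mod_cast Nat.gcd_dvd_right P (216 * d))).symm
    have hodd : Odd r := ⟨108 * d - 1, by omega⟩
    exact (mul_pow_add_one_modEq_neg_one hodd (Int.natCast_dvd_natCast.2 hg3) hbg hrg).trans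
      hwg.symm
  exact infinite_setOf_isBBrier_cullen hb (prod_pos fun m hm => (h.prime m hm).pos) (by omega)
    hbQ (hr ▸ hdQ) hdQ hrw (h.isCoveringModulus_one hw exists_modEq_coveringResidue)
    (h.isCoveringModulus_neg_one hpos hw exists_even_modEq_coveringResidue_add_half)

theorem infinitely_many_cullen_b_brier (b : ℤ) (hb : 2 ≤ b)
    (hb2 : ¬ ∃ n : ℕ, b + 1 = 2 ^ n) :
    {t : ℕ | 0 < t ∧ IsBBrier b ((t : ℤ) * b ^ t + 1)}.Infinite := by
  rcases hb.eq_or_lt with rfl | hb3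
  · exact infinite_setOf_isBBrier_cullen_two
  · choose! p hp hord using fun m (hm : 2 ≤ m) => exists_prime_orderOf_eq hb3 hb2 hm
    exact infinite_setOf_isBBrier_cullen_of_isPrimitivePrimeSystem hb
      ⟨fun m hm => hp m (two_le_of_mem_coveringOrders m hm),
        fun m hm => hord m (two_le_of_mem_coveringOrders m hm)⟩
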